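/- arXiv:2402.07809 — 2 statements merged into one kernel-verified Lean document; each statement's English description precedes it below -/
import Mathlib

section
/- For all K, L ∈ ℕ, lim_{n→∞} | Σ_{p,q=0}^{n} a_{n,p,q}² (p/n)^{2K} (q/n)^{2L} (w_K(p) w_L(q) − 1) | = 0. -/
open Real Finset Filter

/-- The weight `w_k(r)`: equal to `2` if `r = 0` and `k` even, `0` if `r = 0` and `k` odd,
and `1` if `r ≥ 1`. -/
noncomputable def wgt (k r : ℕ) : ℝ :=
  if r = 0 then (if Even k then 2 else 0) else 1

/-!
Since `w_K(p) w_L(q) = 1` unless `p = 0` or `q = 0`, only the edge coefficients `a_{n,0,q}` and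
`a_{n,p,0}` contribute, and by symmetry it suffices that `∑_q a_{n,0,q}² → 0`. In the variables
`u = cos x`, `v = cos y`, and with `μ` the Chebyshev measure `du / √(1 - u²)` on `[-1, 1]`, the
numbers `π a_{n,0,q}` are the Chebyshev coefficients of `v ↦ ∫ T_n((u + v) / 2) dμ(u)`, so by
Bessel's inequality it is enough that this function tends to `0` in `L²(μ)`; by dominated
convergence, pointwise convergence suffices. Finally `T_n((u + v) / 2) = cos (n θ)` with
`θ = arccos ((u + v) / 2)`. The smooth map `θ ↦ 2 cos θ - v` recovers `u`, so the law of `θ` is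
absolutely continuous and the Riemann–Lebesgue lemma applies.
-/

open MeasureTheory Polynomial.Chebyshev
open scoped Topology

section AbsolutelyContinuous

theorem tendsto_integral_cos_mul_cocompact {ν : Measure ℝ} [IsFiniteMeasure ν] (hν : ν ≪ volume) :
    Tendsto (fun t : ℝ => ∫ x, cos (t * x) ∂ν) (cocompact ℝ) (𝓝 0) := by
  set density : ℝ → ℂ := fun x => ((ν.rnDeriv volume x).toReal : ℂ)
  have integrable_density : Integrable density := Measure.integrable_toReal_rnDeriv.ofReal
  have tendsto_scale : Tendsto (fun t : ℝ => (2 * π)⁻¹ * t) (cocompact ℝ) (cocompact ℝ) :=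
    tendsto_cocompact_mul_left₀ (by positivity)
  have tendsto_re := (Complex.continuous_re.tendsto 0).comp
    ((Real.tendsto_integral_exp_smul_cocompact density).comp tendsto_scale)
  refine tendsto_re.congr fun t => ?_
  have integrable_wave :
      Integrable fun x : ℝ => Real.fourierChar (-(x * ((2 * π)⁻¹ * t))) • density x := by
    simpa [mul_comm] using
      (Real.fourierIntegral_convergent_iff ((2 * π)⁻¹ * t)).2 integrable_density
  rw [← integral_rnDeriv_smul hν]
  refine (integral_re integrable_wave).symm.trans (integral_congr_ae (.of_forall fun x => ?_))
  have phase : 2 * π * -(x * ((2 * π)⁻¹ * t)) = -(t * x) := by field_simp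
  simp only [density, Circle.smul_def, Real.fourierChar_apply, smul_eq_mul, phase,
    RCLike.re_to_complex, Complex.re_mul_ofReal, Complex.exp_ofReal_mul_I_re, cos_neg]
  rw [mul_comm]

theorem map_absolutelyContinuous_of_differentiable_leftInverse
    {E : Type*} [NormedAddCommGroup E] [NormedSpace ℝ E] [FiniteDimensional ℝ E]
    [MeasurableSpace E] [BorelSpace E] {μ ν : Measure E} [ν.IsAddHaarMeasure] (hμ : μ ≪ ν)
    {f g : E → E} (hf : AEMeasurable f μ) (hg : Differentiable ℝ g)
    (hgf : ∀ᵐ x ∂μ, g (f x) = x) :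
    μ.map f ≪ ν := by
  refine Measure.AbsolutelyContinuous.mk fun s hs hνs => ?_
  have image_null : μ (g '' s) = 0 :=
    hμ (addHaar_image_eq_zero_of_differentiableOn_of_addHaar_eq_zero ν hg.differentiableOn hνs)
  have preimage_subset_image : f ⁻¹' s ≤ᵐ[μ] g '' s := by
    filter_upwards [hgf] with x hx hxs using ⟨f x, hxs, hx⟩
  rw [Measure.map_apply_of_aemeasurable hf hs]
  exact measure_mono_null_ae preimage_subset_image image_null

end AbsolutelyContinuous

section ChebyshevMeasure

theorem eval_T_eq_cos_natCast_mul_arccos (n : ℕ) {w : ℝ} (hw : w ∈ Set.Icc (-1 : ℝ) 1) :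
    (T ℝ n).eval w = cos (n * arccos w) := by
  conv_lhs => rw [← cos_arccos hw.1 hw.2, T_real_cos, Int.cast_natCast]

instance isFiniteMeasure_measureT : IsFiniteMeasure measureT :=
  (integrable_const_iff_isFiniteMeasure one_ne_zero).1
    (integrable_measureT (f := fun _ => 1) continuousOn_const)

theorem measureT_absolutelyContinuous : measureT ≪ volume :=
  Measure.restrict_le_self.absolutelyContinuous.trans (withDensity_absolutelyContinuous _ _)

theorem ae_mem_Icc_measureT : ∀ᵐ u ∂measureT, u ∈ Set.Icc (-1 : ℝ) 1 :=
  (ae_restrict_mem measurableSet_Ioc).mono fun _ hu => Set.Ioc_subset_Icc_self hu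

theorem integral_sum_mul_eval_T_measureT (N : ℕ) (c : ℕ → ℝ) :
    ∫ u, ∑ p ∈ range (N + 1), c p * (T ℝ p).eval u ∂measureT = π * c 0 := by
  rw [integral_finsetSum _ fun p _ => integrable_measureT (by fun_prop)]
  simp only [integral_const_mul]
  rw [sum_eq_single_of_mem 0 (by simp)]
  · rw [Nat.cast_zero, integral_eval_T_real_measureT_zero, mul_comm]
  · intro p _ hp
    rw [integral_eval_T_real_measureT_of_ne_zero (Int.natCast_ne_zero.2 hp), mul_zero]

theorem pi_div_two_le_integral_eval_T_mul_self_measureT (q : ℕ) :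
    π / 2 ≤ ∫ v, (T ℝ q).eval v * (T ℝ q).eval v ∂measureT := by
  rcases eq_or_ne q 0 with rfl | hq
  · rw [Nat.cast_zero, integral_eval_T_real_mul_self_measureT_zero]
    exact half_le_self pi_pos.le
  · exact (integral_T_real_mul_self_measureT_of_ne_zero hq).ge

theorem pi_div_two_mul_sum_sq_le_integral_sq_measureT (s : Finset ℕ) (c : ℕ → ℝ) :
    π / 2 * ∑ q ∈ s, c q ^ 2 ≤ ∫ v, (∑ q ∈ s, c q * (T ℝ q).eval v) ^ 2 ∂measureT := by
  have expand_sq (v : ℝ) : (∑ q ∈ s, c q * (T ℝ q).eval v) ^ 2 =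
      ∑ p ∈ s, ∑ q ∈ s, c p * c q * ((T ℝ p).eval v * (T ℝ q).eval v) := by
    rw [sq, sum_mul_sum]
    exact sum_congr rfl fun p _ => sum_congr rfl fun q _ => by ring
  simp only [expand_sq]
  rw [integral_finsetSum _ fun p _ => integrable_measureT (by fun_prop), mul_sum]
  refine sum_le_sum fun p hp => ?_
  rw [integral_finsetSum _ fun q _ => integrable_measureT (by fun_prop)]
  simp only [integral_const_mul]
  rw [sum_eq_single_of_mem p hp fun q _ hq => by
    rw [integral_eval_T_real_mul_eval_T_real_measureT_of_ne hq.symm, mul_zero], mul_comm, ← sq]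
  exact mul_le_mul_of_nonneg_left (pi_div_two_le_integral_eval_T_mul_self_measureT p) (sq_nonneg _)

end ChebyshevMeasure

section Averages

variable {u v : ℝ}

theorem half_add_mem_Icc (hu : u ∈ Set.Icc (-1 : ℝ) 1) (hv : v ∈ Set.Icc (-1 : ℝ) 1) :
    (u + v) / 2 ∈ Set.Icc (-1 : ℝ) 1 :=
  ⟨by linarith [hu.1, hv.1], by linarith [hu.2, hv.2]⟩

theorem map_arccos_half_add_absolutelyContinuous (hv : v ∈ Set.Icc (-1 : ℝ) 1) :
    measureT.map (fun u => arccos ((u + v) / 2)) ≪ volume := by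
  refine map_absolutelyContinuous_of_differentiable_leftInverse measureT_absolutelyContinuous
    (g := fun θ => 2 * cos θ - v) (by fun_prop) (by fun_prop) ?_
  filter_upwards [ae_mem_Icc_measureT] with u hu
  obtain ⟨lower, upper⟩ := half_add_mem_Icc hu hv
  rw [cos_arccos lower upper]
  ring

theorem tendsto_integral_eval_T_half_add (hv : v ∈ Set.Icc (-1 : ℝ) 1) :
    Tendsto (fun n : ℕ => ∫ u, (T ℝ n).eval ((u + v) / 2) ∂measureT) atTop (𝓝 0) := by
  have tendsto_natCast : Tendsto (fun n : ℕ => (n : ℝ)) atTop (cocompact ℝ) :=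
    tendsto_natCast_atTop_atTop.mono_right atTop_le_cocompact
  refine ((tendsto_integral_cos_mul_cocompact
    (map_arccos_half_add_absolutelyContinuous hv)).comp tendsto_natCast).congr fun n => ?_
  rw [Function.comp_apply, integral_map (by fun_prop) (by fun_prop)]
  refine integral_congr_ae ?_
  filter_upwards [ae_mem_Icc_measureT] with u hu
  exact (eval_T_eq_cos_natCast_mul_arccos n (half_add_mem_Icc hu hv)).symm

theorem abs_integral_eval_T_half_add_le (n : ℕ) (hv : v ∈ Set.Icc (-1 : ℝ) 1) :
    |∫ u, (T ℝ n).eval ((u + v) / 2) ∂measureT| ≤ measureT.real Set.univ := by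
  rw [← norm_eq_abs, ← one_mul (measureT.real Set.univ)]
  refine norm_integral_le_of_norm_le_const (ae_mem_Icc_measureT.mono fun u hu => ?_)
  exact abs_eval_T_real_le_one _ (abs_le.2 (half_add_mem_Icc hu hv))

theorem tendsto_integral_sq_integral_eval_T_half_add :
    Tendsto (fun n : ℕ => ∫ v, (∫ u, (T ℝ n).eval ((u + v) / 2) ∂measureT) ^ 2 ∂measureT)
      atTop (𝓝 0) := by
  have stronglyMeasurable_average (n : ℕ) :
      StronglyMeasurable fun v : ℝ => ∫ u, (T ℝ n).eval ((u + v) / 2) ∂measureT :=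
    StronglyMeasurable.integral_prod_right
      (Continuous.stronglyMeasurable (by fun_prop))
  rw [← integral_zero ℝ ℝ (μ := measureT)]
  refine tendsto_integral_of_dominated_convergence (fun _ => measureT.real Set.univ ^ 2)
    (fun n => ((stronglyMeasurable_average n).pow 2).aestronglyMeasurable) (integrable_const _)
    (fun n => ?_) ?_
  · filter_upwards [ae_mem_Icc_measureT] with v hv
    rw [norm_pow]
    exact pow_le_pow_left₀ (norm_nonneg _) (abs_integral_eval_T_half_add_le n hv) 2
  · filter_upwards [ae_mem_Icc_measureT] with v hv
    simpa using (tendsto_integral_eval_T_half_add hv).pow 2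

end Averages

/-- `c` is the array of coefficients of a double Chebyshev expansion
`F u v = ∑_{p,q ≤ N} c_{p,q} T_p(u) T_q(v)` on the square `[-1, 1]²`. With `u = cos x` and
`v = cos y` this is the double cosine expansion of `F (cos x) (cos y)`. -/
def IsChebyshevExpansion (F : ℝ → ℝ → ℝ) (N : ℕ) (c : ℕ → ℕ → ℝ) : Prop :=
  ∀ u ∈ Set.Icc (-1 : ℝ) 1, ∀ v ∈ Set.Icc (-1 : ℝ) 1,
    F u v = ∑ p ∈ range (N + 1), ∑ q ∈ range (N + 1), c p q * (T ℝ p).eval u * (T ℝ q).eval v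

namespace IsChebyshevExpansion

variable {F : ℝ → ℝ → ℝ} {N : ℕ} {c : ℕ → ℕ → ℝ}

theorem of_cos (h : ∀ x y, F (cos x) (cos y) =
      ∑ p ∈ range (N + 1), ∑ q ∈ range (N + 1), c p q * cos (p * x) * cos (q * y)) :
    IsChebyshevExpansion F N c := by
  intro u hu v hv
  simpa only [cos_arccos hu.1 hu.2, cos_arccos hv.1 hv.2, eval_T_eq_cos_natCast_mul_arccos _ hu,
    eval_T_eq_cos_natCast_mul_arccos _ hv] using h (arccos u) (arccos v)

theorem swap (h : IsChebyshevExpansion F N c) :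
    IsChebyshevExpansion (fun u v => F v u) N fun p q => c q p := by
  intro u hu v hv
  refine (h v hv u hu).trans ?_
  rw [sum_comm]
  exact sum_congr rfl fun p _ => sum_congr rfl fun q _ => mul_right_comm _ _ _

theorem integral_left_eq (h : IsChebyshevExpansion F N c) {v : ℝ} (hv : v ∈ Set.Icc (-1 : ℝ) 1) :
    ∫ u, F u v ∂measureT = π * ∑ q ∈ range (N + 1), c 0 q * (T ℝ q).eval v := by
  rw [← integral_sum_mul_eval_T_measureT N fun p =>
    ∑ q ∈ range (N + 1), c p q * (T ℝ q).eval v]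
  refine integral_congr_ae ?_
  filter_upwards [ae_mem_Icc_measureT] with u hu
  simp only [h u hu v hv, sum_mul, mul_right_comm]

theorem sum_sq_zero_left_le (h : IsChebyshevExpansion F N c) :
    ∑ q ∈ range (N + 1), c 0 q ^ 2 ≤
      2 / π ^ 3 * ∫ v, (∫ u, F u v ∂measureT) ^ 2 ∂measureT := by
  have integral_sq : ∫ v, (∫ u, F u v ∂measureT) ^ 2 ∂measureT =
      π ^ 2 * ∫ v, (∑ q ∈ range (N + 1), c 0 q * (T ℝ q).eval v) ^ 2 ∂measureT := by
    rw [← integral_const_mul]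
    refine integral_congr_ae ?_
    filter_upwards [ae_mem_Icc_measureT] with v hv
    rw [h.integral_left_eq hv, mul_pow]
  calc ∑ q ∈ range (N + 1), c 0 q ^ 2
      = 2 / π ^ 3 * (π ^ 2 * (π / 2 * ∑ q ∈ range (N + 1), c 0 q ^ 2)) := by field_simp
    _ ≤ 2 / π ^ 3 * ∫ v, (∫ u, F u v ∂measureT) ^ 2 ∂measureT := by
      rw [integral_sq]
      gcongr
      exact pi_div_two_mul_sum_sq_le_integral_sq_measureT _ _

end IsChebyshevExpansion

theorem tendsto_sum_sq_zero_left_of_isChebyshevExpansion {a : ℕ → ℕ → ℕ → ℝ}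
    (h : ∀ n : ℕ, IsChebyshevExpansion (fun u v => (T ℝ n).eval ((u + v) / 2)) n (a n)) :
    Tendsto (fun n => ∑ q ∈ range (n + 1), a n 0 q ^ 2) atTop (𝓝 0) :=
  squeeze_zero (fun _ => sum_nonneg fun _ _ => sq_nonneg _) (fun n => (h n).sum_sq_zero_left_le)
    (by simpa using tendsto_integral_sq_integral_eval_T_half_add.const_mul (2 / π ^ 3))

section Weights

theorem wgt_of_ne_zero (k : ℕ) {r : ℕ} (hr : r ≠ 0) : wgt k r = 1 :=
  if_neg hr

theorem wgt_mem_Icc (k r : ℕ) : wgt k r ∈ Set.Icc (0 : ℝ) 2 := by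
  unfold wgt
  split_ifs <;> norm_num

theorem abs_wgt_mul_wgt_sub_one_le (k l p q : ℕ) : |wgt k p * wgt l q - 1| ≤ 3 := by
  obtain ⟨wgt_p_nonneg, wgt_p_le⟩ := wgt_mem_Icc k p
  obtain ⟨wgt_q_nonneg, wgt_q_le⟩ := wgt_mem_Icc l q
  rw [abs_le]
  constructor <;> nlinarith

theorem natCast_div_pow_le_one {r n : ℕ} (h : r ≤ n) (k : ℕ) :
    ((r : ℝ) / n) ^ k ≤ 1 :=
  pow_le_one₀ (by positivity) (div_le_one_of_le₀ (Nat.cast_le.2 h) n.cast_nonneg)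

theorem abs_weighted_moment_difference_term_le {n p q : ℕ} (hp : p ≤ n) (hq : q ≤ n)
    (b : ℝ) (K L : ℕ) :
    |b ^ 2 * ((p : ℝ) / n) ^ (2 * K) * ((q : ℝ) / n) ^ (2 * L) * (wgt K p * wgt L q - 1)| ≤
      3 * ((if p = 0 then b ^ 2 else 0) + if q = 0 then b ^ 2 else 0) := by
  by_cases h_edge : p = 0 ∨ q = 0
  · calc |b ^ 2 * ((p : ℝ) / n) ^ (2 * K) * ((q : ℝ) / n) ^ (2 * L) * (wgt K p * wgt L q - 1)|
        = b ^ 2 * ((p : ℝ) / n) ^ (2 * K) * ((q : ℝ) / n) ^ (2 * L) *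
            |wgt K p * wgt L q - 1| := by rw [abs_mul, abs_of_nonneg (by positivity)]
      _ ≤ b ^ 2 * 1 * 1 * 3 := by
        gcongr
        exacts [natCast_div_pow_le_one hp _, natCast_div_pow_le_one hq _,
          abs_wgt_mul_wgt_sub_one_le K L p q]
      _ ≤ 3 * ((if p = 0 then b ^ 2 else 0) + if q = 0 then b ^ 2 else 0) := by
        have := sq_nonneg b
        rcases h_edge with h | h <;> rw [if_pos h] <;> split_ifs <;> linarith
  · obtain ⟨hp0, hq0⟩ := not_or.1 h_edge
    simp [wgt_of_ne_zero, hp0, hq0]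

theorem abs_weighted_moment_difference_le (n : ℕ) (b : ℕ → ℕ → ℝ) (K L : ℕ) :
    |∑ p ∈ range (n + 1), ∑ q ∈ range (n + 1),
        b p q ^ 2 * ((p : ℝ) / n) ^ (2 * K) * ((q : ℝ) / n) ^ (2 * L) *
          (wgt K p * wgt L q - 1)| ≤
      3 * (∑ q ∈ range (n + 1), b 0 q ^ 2 + ∑ p ∈ range (n + 1), b p 0 ^ 2) :=
  calc |∑ p ∈ range (n + 1), ∑ q ∈ range (n + 1),
        b p q ^ 2 * ((p : ℝ) / n) ^ (2 * K) * ((q : ℝ) / n) ^ (2 * L) * (wgt K p * wgt L q - 1)|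
      ≤ ∑ p ∈ range (n + 1), ∑ q ∈ range (n + 1),
          3 * ((if p = 0 then b p q ^ 2 else 0) + if q = 0 then b p q ^ 2 else 0) :=
        (abs_sum_le_sum_abs _ _).trans <| sum_le_sum fun _ hp =>
          (abs_sum_le_sum_abs _ _).trans <| sum_le_sum fun _ hq =>
            abs_weighted_moment_difference_term_le (mem_range_succ_iff.1 hp)
              (mem_range_succ_iff.1 hq) _ K L
    _ = 3 * (∑ p ∈ range (n + 1), ∑ q ∈ range (n + 1), (if p = 0 then b p q ^ 2 else 0) +
          ∑ p ∈ range (n + 1), ∑ q ∈ range (n + 1), if q = 0 then b p q ^ 2 else 0) := by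
        simp only [← mul_sum, sum_add_distrib]
    _ = 3 * (∑ q ∈ range (n + 1), b 0 q ^ 2 + ∑ p ∈ range (n + 1), b p 0 ^ 2) := by
        rw [sum_comm]
        simp

end Weights

/-- `lim_{n→∞} | Σ_{p,q} a_{n,p,q}² (p/n)^{2K} (q/n)^{2L} (w_K(p) w_L(q) − 1) | = 0`. -/
theorem weighted_moment_difference_tendsto_zero
    (a : ℕ → ℕ → ℕ → ℝ)
    (ha : ∀ (n : ℕ) (x y : ℝ),
      (Polynomial.Chebyshev.T ℝ n).eval ((Real.cos x + Real.cos y) / 2) =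
        ∑ p ∈ Finset.range (n + 1), ∑ q ∈ Finset.range (n + 1),
          a n p q * Real.cos (p * x) * Real.cos (q * y))
    (K L : ℕ) :
    Filter.Tendsto (fun n : ℕ =>
        |∑ p ∈ Finset.range (n + 1), ∑ q ∈ Finset.range (n + 1),
            (a n p q) ^ 2 * ((p : ℝ) / n) ^ (2 * K) * ((q : ℝ) / n) ^ (2 * L) *
              (wgt K p * wgt L q - 1)|)
      Filter.atTop (nhds 0) := by
  have expansion (n : ℕ) :
      IsChebyshevExpansion (fun u v => (T ℝ n).eval ((u + v) / 2)) n (a n) :=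
    .of_cos (ha n)
  have expansion_swap (n : ℕ) :
      IsChebyshevExpansion (fun u v => (T ℝ n).eval ((u + v) / 2)) n fun p q => a n q p := by
    simpa only [add_comm] using (expansion n).swap
  have row_tendsto := tendsto_sum_sq_zero_left_of_isChebyshevExpansion expansion
  have column_tendsto := tendsto_sum_sq_zero_left_of_isChebyshevExpansion expansion_swap
  have edges_tendsto := (row_tendsto.add column_tendsto).const_mul 3
  simp only [add_zero, mul_zero] at edges_tendsto
  exact squeeze_zero (fun _ => abs_nonneg _)
    (fun n => abs_weighted_moment_difference_le n (a n) K L) edges_tendsto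
end

section
/- For all K, L ∈ ℕ, lim_{ε→0⁺} limsup_{n→∞} | I_{K,L}(ε,n) − J_{K,L}(ε,n) | = 0, where I_{K,L}(ε,n) = (1/(π² n^{2(K+L)})) ∫_{A_ε} ( T_n^{(K+L)}((cos x + cos y)/2) · (−sin x / 2)^K · (−sin y / 2)^L )² dx dy and J_{K,L}(ε,n) = (1/(π² 2^{2(K+L)})) ∫_{A_ε} ξ_{K+L}²(n θ(x,y)) · (sin x / sin θ(x,y))^{2K} · (sin y / sin θ(x,y))^{2L} dx dy. -/
open Real MeasureTheory Filter Polynomial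

/-- `A_ε = {(x,y) ∈ [0,2π]² : |(cos x + cos y)/2| ≤ 1 − ε}`. -/
def goodSet (ε : ℝ) : Set (ℝ × ℝ) :=
  {z | z ∈ Set.Icc (0 : ℝ) (2 * π) ×ˢ Set.Icc (0 : ℝ) (2 * π) ∧
    |(Real.cos z.1 + Real.cos z.2) / 2| ≤ 1 - ε}

/-- `θ(x,y) = arccos((cos x + cos y)/2)`. -/
noncomputable def thetaFun (x y : ℝ) : ℝ :=
  Real.arccos ((Real.cos x + Real.cos y) / 2)

/-- `I_{K,L}(ε,n) = (1/(π² n^{2(K+L)})) ∫_{A_ε}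
  (T_n^{(K+L)}((cos x + cos y)/2) (−sin x/2)^K (−sin y/2)^L)² dx dy`. -/
noncomputable def mainTermIntegral (K L : ℕ) (ε : ℝ) (n : ℕ) : ℝ :=
  (π ^ 2 * (n : ℝ) ^ (2 * (K + L)))⁻¹ *
    ∫ z in goodSet ε,
      ((Polynomial.derivative^[K + L] (Polynomial.Chebyshev.T ℝ n)).eval
          ((Real.cos z.1 + Real.cos z.2) / 2) *
        (-Real.sin z.1 / 2) ^ K * (-Real.sin z.2 / 2) ^ L) ^ 2

/-- `J_{K,L}(ε,n) = (1/(π² 2^{2(K+L)})) ∫_{A_ε} ξ_{K+L}²(n θ(x,y))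
  (sin x / sin θ(x,y))^{2K} (sin y / sin θ(x,y))^{2L} dx dy`,
where `ξ_r` is the `r`-th derivative of cosine. -/
noncomputable def simplifiedIntegral (K L : ℕ) (ε : ℝ) (n : ℕ) : ℝ :=
  (π ^ 2 * 2 ^ (2 * (K + L)))⁻¹ *
    ∫ z in goodSet ε,
      (iteratedDeriv (K + L) Real.cos ((n : ℝ) * thetaFun z.1 z.2)) ^ 2 *
        (Real.sin z.1 / Real.sin (thetaFun z.1 z.2)) ^ (2 * K) *
        (Real.sin z.2 / Real.sin (thetaFun z.1 z.2)) ^ (2 * L)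

/-!
The Chebyshev equation, differentiated `r` times, is a two-step recurrence in `r` for
`E_r = T_n^{(r)}(cos θ) (-sin θ / n)^r`:

`E_{r+2} = -(2r + 1) cot θ E_{r+1} / n + r² E_r / n² - E_r`.

Since `E_0 = cos (n θ)`, `E_1 = -sin (n θ)` and `ξ_{r+2} = -ξ_r`, induction gives
`E_r = ξ_r(n θ) + O(1/n)`, uniformly for `θ` in a compact set on which `sin θ` does not vanish. On
`A_ε` the angle `θ(x,y)` stays in such a set, and the two integrands differ only by the replacement
of `E_{K+L}` by `ξ_{K+L}(n θ)`. Hence `I - J = O(1/n)` already for each fixed `ε > 0`.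
-/

open Asymptotics

/-- `T_n^{(r)}(cos θ) (-sin θ / n)^r`, the leading term of the chain rule for the `r`-th derivative
of `T_n(cos θ)` in `θ`, divided by `n ^ r`. The sign makes it approximate `ξ_r(n θ)` itself rather
than `(-1) ^ r ξ_r(n θ)`. Junk value at `n = 0`. -/
noncomputable def normalizedDerivT (r n : ℕ) (θ : ℝ) : ℝ :=
  (derivative^[r] (Chebyshev.T ℝ n)).eval (cos θ) * (-sin θ / n) ^ r

lemma continuous_normalizedDerivT (r n : ℕ) : Continuous (normalizedDerivT r n) := by
  unfold normalizedDerivT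
  fun_prop

lemma normalizedDerivT_zero (n : ℕ) (θ : ℝ) : normalizedDerivT 0 n θ = cos (n * θ) := by
  simp [normalizedDerivT, Chebyshev.T_real_cos]

lemma normalizedDerivT_one {n : ℕ} (hn : n ≠ 0) (θ : ℝ) :
    normalizedDerivT 1 n θ = -sin (n * θ) := by
  have hU : (Chebyshev.U ℝ ((n : ℤ) - 1)).eval (cos θ) * sin θ = sin (n * θ) := by
    simp [Chebyshev.U_real_cos]
  have hT : (derivative (Chebyshev.T ℝ n)).eval (cos θ) =
      n * (Chebyshev.U ℝ ((n : ℤ) - 1)).eval (cos θ) := by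
    simp [Chebyshev.T_derivative_eq_U]
  rw [normalizedDerivT, Function.iterate_one, hT, ← hU]
  field_simp

lemma normalizedDerivT_add_two (r : ℕ) {n : ℕ} (hn : n ≠ 0) {θ : ℝ} (hθ : sin θ ≠ 0) :
    normalizedDerivT (r + 2) n θ =
      -(2 * r + 1) * (cos θ / sin θ) * normalizedDerivT (r + 1) n θ * (n : ℝ)⁻¹ +
        r ^ 2 * normalizedDerivT r n θ * (n : ℝ)⁻¹ * (n : ℝ)⁻¹ - normalizedDerivT r n θ := by
  have hrec := Chebyshev.one_sub_X_sq_mul_iterate_derivative_T_eval (R := ℝ) n r (cos θ)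
  rw [← sin_sq, Int.cast_natCast] at hrec
  simp only [normalizedDerivT, pow_succ _ r, pow_succ _ (r + 1)]
  field_simp
  linear_combination (-sin θ / n) ^ r * hrec

section Asymptotics

variable {S : Set ℝ}

lemma iteratedDeriv_cos_isBigO_one {α : Type*} (r : ℕ) (f : α → ℝ) (l : Filter α) :
    (fun a => iteratedDeriv r cos (f a)) =O[l] (fun _ => (1 : ℝ)) :=
  .of_bound' (.of_forall fun a => by simpa using abs_iteratedDeriv_cos_le_one r (f a))

lemma natCast_inv_snd_isBigO_one {α : Type*} (l : Filter α) :
    (fun p : α × ℕ => (p.2 : ℝ)⁻¹) =O[l ×ˢ atTop] (fun _ => (1 : ℝ)) :=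
  (tendsto_inv_atTop_nhds_zero_nat.isBigO_one ℝ).comp_tendsto tendsto_snd

lemma normalizedDerivT_isBigO_one_of_sub {r : ℕ} {l : Filter ℝ}
    (h : (fun p : ℝ × ℕ => normalizedDerivT r p.2 p.1 - iteratedDeriv r cos (p.2 * p.1))
      =O[l ×ˢ atTop] fun p => (p.2 : ℝ)⁻¹) :
    (fun p : ℝ × ℕ => normalizedDerivT r p.2 p.1) =O[l ×ˢ atTop] (fun _ => (1 : ℝ)) := by
  simpa using (h.trans (natCast_inv_snd_isBigO_one l)).add
    (iteratedDeriv_cos_isBigO_one r (fun p : ℝ × ℕ => p.2 * p.1) _)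

theorem normalizedDerivT_sub_iteratedDeriv_cos_isBigO (hS : IsCompact S)
    (hsin : ∀ θ ∈ S, sin θ ≠ 0) (r : ℕ) :
    (fun p : ℝ × ℕ => normalizedDerivT r p.2 p.1 - iteratedDeriv r cos (p.2 * p.1))
      =O[𝓟 S ×ˢ atTop] fun p => (p.2 : ℝ)⁻¹ := by
  have hne : ∀ᶠ p : ℝ × ℕ in 𝓟 S ×ˢ atTop, sin p.1 ≠ 0 ∧ p.2 ≠ 0 :=
    (eventually_principal.2 hsin).prod_mk (eventually_ne_atTop 0)
  induction r using Nat.twoStepInduction with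
  | zero => simpa [normalizedDerivT_zero] using isBigO_zero _ _
  | one =>
    refine (isBigO_zero _ _).congr' ?_ .rfl
    filter_upwards [hne] with p hp
    simp [normalizedDerivT_one hp.2]
  | more r ih ih_succ =>
    have hcot : (fun p : ℝ × ℕ => cos p.1 / sin p.1) =O[𝓟 S ×ˢ atTop] (fun _ => (1 : ℝ)) :=
      ((continuousOn_cos.div continuousOn_sin hsin).isBigO_principal hS (c := (1 : ℝ))
        (by simp)).comp_fst _
    have hinv := isBigO_refl (fun p : ℝ × ℕ => (p.2 : ℝ)⁻¹) (𝓟 S ×ˢ atTop)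
    have hfirst : (fun p : ℝ × ℕ => -(2 * r + 1) * (cos p.1 / sin p.1) *
        normalizedDerivT (r + 1) p.2 p.1 * (p.2 : ℝ)⁻¹)
        =O[𝓟 S ×ˢ atTop] fun p => (p.2 : ℝ)⁻¹ := by
      simpa using ((hcot.const_mul_left (-(2 * r + 1))).mul
        (normalizedDerivT_isBigO_one_of_sub ih_succ)).mul hinv
    have hsecond : (fun p : ℝ × ℕ => r ^ 2 * normalizedDerivT r p.2 p.1 *
        (p.2 : ℝ)⁻¹ * (p.2 : ℝ)⁻¹) =O[𝓟 S ×ˢ atTop] fun p => (p.2 : ℝ)⁻¹ := by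
      simpa using (((normalizedDerivT_isBigO_one_of_sub ih).const_mul_left
        (r ^ 2 : ℝ)).mul (natCast_inv_snd_isBigO_one _)).mul hinv
    refine ((hfirst.add hsecond).sub ih).congr' ?_ .rfl
    filter_upwards [hne] with p hp
    rw [normalizedDerivT_add_two r hp.2 hp.1, iteratedDeriv_add_one_cos,
      iteratedDeriv_add_one_sin, Pi.neg_apply]
    ring

theorem normalizedDerivT_sq_sub_iteratedDeriv_cos_sq_isBigO (hS : IsCompact S)
    (hsin : ∀ θ ∈ S, sin θ ≠ 0) (r : ℕ) :
    (fun p : ℝ × ℕ => normalizedDerivT r p.2 p.1 ^ 2 - iteratedDeriv r cos (p.2 * p.1) ^ 2)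
      =O[𝓟 S ×ˢ atTop] fun p => (p.2 : ℝ)⁻¹ := by
  have hsub := normalizedDerivT_sub_iteratedDeriv_cos_isBigO hS hsin r
  have hadd := (normalizedDerivT_isBigO_one_of_sub hsub).add
    (iteratedDeriv_cos_isBigO_one r (fun p : ℝ × ℕ => p.2 * p.1) _)
  simpa [sq_sub_sq] using hadd.mul hsub

end Asymptotics

section GoodSet

variable {ε : ℝ} {z : ℝ × ℝ}

lemma isCompact_goodSet (ε : ℝ) : IsCompact (goodSet ε) :=
  (isCompact_Icc.prod isCompact_Icc).inter_right <| isClosed_le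
    (f := fun z : ℝ × ℝ => |(cos z.1 + cos z.2) / 2|) (by fun_prop) continuous_const

lemma continuous_thetaFun : Continuous fun z : ℝ × ℝ => thetaFun z.1 z.2 := by
  unfold thetaFun
  fun_prop

lemma half_cos_add_cos_mem_Ioo (hε : 0 < ε) (hz : z ∈ goodSet ε) :
    (cos z.1 + cos z.2) / 2 ∈ Set.Ioo (-1) 1 :=
  abs_lt.1 (hz.2.trans_lt (sub_lt_self 1 hε))

lemma cos_thetaFun (hε : 0 < ε) (hz : z ∈ goodSet ε) :
    cos (thetaFun z.1 z.2) = (cos z.1 + cos z.2) / 2 :=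
  have h := half_cos_add_cos_mem_Ioo hε hz
  cos_arccos h.1.le h.2.le

lemma sin_thetaFun_ne_zero (hε : 0 < ε) (hz : z ∈ goodSet ε) : sin (thetaFun z.1 z.2) ≠ 0 :=
  have h := half_cos_add_cos_mem_Ioo hε hz
  (sin_pos_of_pos_of_lt_pi (arccos_pos.2 h.2) (arccos_lt_pi.2 h.1)).ne'

/-- The weight `(sin x / sin θ(x,y))^{2K} (sin y / sin θ(x,y))^{2L}` common to the two integrals
once the derivative of `T_n` in the first is normalised. -/
noncomputable def sinRatioWeight (K L : ℕ) (z : ℝ × ℝ) : ℝ :=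
  (sin z.1 / sin (thetaFun z.1 z.2)) ^ (2 * K) * (sin z.2 / sin (thetaFun z.1 z.2)) ^ (2 * L)

variable (K L : ℕ)

lemma continuousOn_sinRatioWeight (hε : 0 < ε) : ContinuousOn (sinRatioWeight K L) (goodSet ε) := by
  have hsin : ContinuousOn (fun z : ℝ × ℝ => sin (thetaFun z.1 z.2)) (goodSet ε) :=
    (continuous_sin.comp continuous_thetaFun).continuousOn
  have hne : ∀ z ∈ goodSet ε, sin (thetaFun z.1 z.2) ≠ 0 := fun z hz => sin_thetaFun_ne_zero hε hz
  unfold sinRatioWeight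
  fun_prop (disch := assumption)

lemma integrableOn_comp_thetaFun_mul_sinRatioWeight (hε : 0 < ε) {f : ℝ → ℝ}
    (hf : Continuous f) :
    IntegrableOn (fun z => f (thetaFun z.1 z.2) * sinRatioWeight K L z) (goodSet ε) :=
  ((hf.comp continuous_thetaFun).continuousOn.mul
    (continuousOn_sinRatioWeight K L hε)).integrableOn_compact (isCompact_goodSet ε)

lemma mainTermIntegral_eq_integral_normalizedDerivT (hε : 0 < ε) {n : ℕ} (hn : n ≠ 0) :
    mainTermIntegral K L ε n = (π ^ 2 * 2 ^ (2 * (K + L)))⁻¹ * ∫ z in goodSet ε,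
      normalizedDerivT (K + L) n (thetaFun z.1 z.2) ^ 2 * sinRatioWeight K L z := by
  rw [mainTermIntegral, ← integral_const_mul, ← integral_const_mul]
  refine setIntegral_congr_fun (isCompact_goodSet ε).measurableSet fun z hz => ?_
  have hsin := sin_thetaFun_ne_zero hε hz
  simp only [normalizedDerivT, sinRatioWeight, cos_thetaFun hε hz]
  simp only [mul_pow, pow_mul, pow_right_comm _ K 2, pow_right_comm _ L 2, div_pow, neg_sq,
    pow_add]
  field_simp

lemma simplifiedIntegral_eq_integral_sinRatioWeight (ε : ℝ) (n : ℕ) :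
    simplifiedIntegral K L ε n = (π ^ 2 * 2 ^ (2 * (K + L)))⁻¹ * ∫ z in goodSet ε,
      iteratedDeriv (K + L) cos (n * thetaFun z.1 z.2) ^ 2 * sinRatioWeight K L z := by
  simp only [simplifiedIntegral, sinRatioWeight, mul_assoc]

lemma mainTermIntegral_sub_simplifiedIntegral (hε : 0 < ε) {n : ℕ} (hn : n ≠ 0) :
    mainTermIntegral K L ε n - simplifiedIntegral K L ε n =
      (π ^ 2 * 2 ^ (2 * (K + L)))⁻¹ * ∫ z in goodSet ε,
        (normalizedDerivT (K + L) n (thetaFun z.1 z.2) ^ 2 -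
          iteratedDeriv (K + L) cos (n * thetaFun z.1 z.2) ^ 2) * sinRatioWeight K L z := by
  have hderiv : Continuous (iteratedDeriv (K + L) cos) :=
    (differentiable_iteratedDeriv_cos (K + L)).continuous
  rw [mainTermIntegral_eq_integral_normalizedDerivT K L hε hn,
    simplifiedIntegral_eq_integral_sinRatioWeight, ← mul_sub, ← integral_sub]
  · simp only [sub_mul]
  · exact integrableOn_comp_thetaFun_mul_sinRatioWeight K L hε
      ((continuous_normalizedDerivT (K + L) n).pow 2)
  · exact integrableOn_comp_thetaFun_mul_sinRatioWeight K L hε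
      ((hderiv.comp (continuous_const_mul (n : ℝ))).pow 2)

lemma sq_sub_sq_comp_thetaFun_mul_sinRatioWeight_isBigO (hε : 0 < ε) :
    (fun p : (ℝ × ℝ) × ℕ =>
      (normalizedDerivT (K + L) p.2 (thetaFun p.1.1 p.1.2) ^ 2 -
        iteratedDeriv (K + L) cos (p.2 * thetaFun p.1.1 p.1.2) ^ 2) * sinRatioWeight K L p.1)
      =O[𝓟 (goodSet ε) ×ˢ atTop] fun p => (p.2 : ℝ)⁻¹ := by
  set S := (fun z : ℝ × ℝ => thetaFun z.1 z.2) '' goodSet ε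
  have hS : IsCompact S := (isCompact_goodSet ε).image continuous_thetaFun
  have hsin : ∀ θ ∈ S, sin θ ≠ 0 :=
    Set.forall_mem_image.2 fun z hz => sin_thetaFun_ne_zero hε hz
  have htheta : Tendsto (fun z : ℝ × ℝ => thetaFun z.1 z.2) (𝓟 (goodSet ε)) (𝓟 S) :=
    tendsto_principal_principal.2 fun z hz => Set.mem_image_of_mem _ hz
  have hsq := (normalizedDerivT_sq_sub_iteratedDeriv_cos_sq_isBigO hS hsin (K + L)).comp_tendsto
    (htheta.prodMap tendsto_id)
  have hweight : (fun p : (ℝ × ℝ) × ℕ => sinRatioWeight K L p.1)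
      =O[𝓟 (goodSet ε) ×ˢ atTop] (fun _ => (1 : ℝ)) :=
    ((continuousOn_sinRatioWeight K L hε).isBigO_principal (isCompact_goodSet ε) (c := (1 : ℝ))
      (by simp)).comp_fst _
  simpa [Function.comp_def] using hsq.mul hweight

end GoodSet

theorem second_simplification_general (K L : ℕ) {ε : ℝ} (hε : 0 < ε) :
    (fun n : ℕ => mainTermIntegral K L ε n - simplifiedIntegral K L ε n)
      =O[atTop] fun n => (n : ℝ)⁻¹ := by
  have hintegral := (sq_sub_sq_comp_thetaFun_mul_sinRatioWeight_isBigO K L hε).set_integral_isBigO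
    (μ := volume) (g := fun n : ℕ => (n : ℝ)⁻¹) (isCompact_goodSet ε).measure_lt_top
  refine (hintegral.const_mul_left (π ^ 2 * 2 ^ (2 * (K + L)))⁻¹).congr' ?_ .rfl
  filter_upwards [eventually_ne_atTop 0] with n hn
  exact (mainTermIntegral_sub_simplifiedIntegral K L hε hn).symm

/-- `lim_{ε→0⁺} limsup_{n→∞} |I_{K,L}(ε,n) − J_{K,L}(ε,n)| = 0`. -/
theorem second_simplification (K L : ℕ) :
    Filter.Tendsto (fun ε : ℝ =>
        Filter.limsup (fun n : ℕ => |mainTermIntegral K L ε n - simplifiedIntegral K L ε n|)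
          Filter.atTop)
      (nhdsWithin 0 (Set.Ioi 0)) (nhds 0) := by
  refine tendsto_const_nhds.congr' ?_
  filter_upwards [self_mem_nhdsWithin] with ε hε
  have hdiff := (second_simplification_general K L hε).trans_tendsto
    tendsto_inv_atTop_nhds_zero_nat
  simpa using hdiff.abs.limsup_eq.symm
end
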